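/- Let p be a prime, H an extraspecial p-group, and T a finite abelian p-group that is not elementary abelian (its exponent exceeds p). Set G = H × T, of order p^n. Then |M(G)| ≤ p^{(n-1)(n-2)/2 - 2}. -/

import Mathlib

/-- The kernel of the canonical free presentation `FreeGroup G → G`. -/
def presentationKernel (G : Type u) [Group G] : Subgroup (FreeGroup G) :=
  (FreeGroup.lift (id : G → G)).ker

/-- The Schur multiplier `M(G) = H₂(G, ℤ)` (second integral group homology) of a
group `G`, realised via Hopf's integral formula `H₂(G, ℤ) ≅ (R ⊓ [F, F]) / [F, R]`,
where `F = FreeGroup G` is the canonical free group surjecting onto `G` with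
kernel `R`. -/
def SchurMultiplier (G : Type u) [Group G] : Type u :=
  ↥(presentationKernel G ⊓ commutator (FreeGroup G)) ⧸
    (⁅(⊤ : Subgroup (FreeGroup G)), presentationKernel G⁆.subgroupOf
      (presentationKernel G ⊓ commutator (FreeGroup G)))

/-- A finite `p`-group `H` is extraspecial if its center, derived subgroup and
Frattini subgroup coincide and have order `p`. -/
def IsExtraspecial (p : ℕ) (H : Type*) [Group H] : Prop :=
  Subgroup.center H = commutator H ∧ Subgroup.center H = frattini H ∧
    Nat.card (Subgroup.center H) = p

/-!
Write `G = F / R` with `F` free. By Hopf's formula `|M(G)| |G'| = |F' : [F, R]|`, and this index is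
bounded by climbing a chain of subgroups from `R` up to `F`. If `[F, x] ≤ A`, then modulo `[F, A]`
the map `g ↦ [x, g]` is a homomorphism onto `[F, A⟨x⟩] / [F, A]`, so the order of this quotient
divides the index of every subgroup that the map kills.

* The first step adjoins some `x ∈ F'` lifting a generator of `G'`. By the three subgroups lemma its
  homomorphism kills the preimage of `Z(G)`, so this step costs only `|G : Z(G)|`.
* From then on `A` contains `F'`, and the homomorphism of `x` kills `A⟨x⟩`. If `|F : A| = p ^ d`,
  adjoining one element at a time costs at most `p ^ ((d - 1) + ⋯ + 1 + 0) = p ^ (d choose 2)`.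
* As `G / G'` is not elementary abelian, the first of these elements can be chosen of order at least
  `p ^ 2` modulo `A`, which turns `d choose 2` into `(d - 1) choose 2`.
-/

open Subgroup QuotientGroup
open scoped commutatorElement

section RelIndex

variable {E : Type*} [Group E]

theorem pow_succ_dvd_orderOf_of_pow_ne_one {p N k : ℕ} (hp : p.Prime) {x : E}
    (hx : orderOf x ∣ p ^ N) (hk : x ^ p ^ k ≠ 1) : p ^ (k + 1) ∣ orderOf x := by
  obtain ⟨j, -, hj⟩ := (Nat.dvd_prime_pow hp).1 hx
  rw [hj]
  refine pow_dvd_pow p (Nat.lt_of_not_le fun hjk ↦ hk ?_)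
  exact orderOf_dvd_iff_pow_eq_one.1 (hj ▸ pow_dvd_pow p hjk)

theorem relIndex_sup_zpowers (A : Subgroup E) [A.Normal] (x : E) :
    A.relIndex (A ⊔ zpowers x) = orderOf (x : E ⧸ A) := by
  have h := relIndex_ker (zpowers x) (mk' A)
  rwa [ker_mk', MonoidHom.map_zpowers, Nat.card_zpowers, ← relIndex_sup_left] at h

theorem index_sup_zpowers_dvd_of_pow_notMem {p d k : ℕ} (hp : p.Prime) {A : Subgroup E}
    [A.Normal] (hA : A.index ∣ p ^ (d + k + 1)) {x : E} (hx : x ^ p ^ k ∉ A) :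
    (A ⊔ zpowers x).index ∣ p ^ d := by
  have hxA : (x : E ⧸ A) ^ p ^ k ≠ 1 := by
    rwa [← mk_pow, Ne, eq_one_iff]
  have hk : p ^ (k + 1) ∣ orderOf (x : E ⧸ A) :=
    pow_succ_dvd_orderOf_of_pow_ne_one hp ((_root_.orderOf_dvd_natCard _).trans hA) hxA
  refine Nat.dvd_of_mul_dvd_mul_left (pow_pos hp.pos (k + 1)) ?_
  calc p ^ (k + 1) * (A ⊔ zpowers x).index
      ∣ A.relIndex (A ⊔ zpowers x) * (A ⊔ zpowers x).index :=
        mul_dvd_mul_right (relIndex_sup_zpowers A x ▸ hk) _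
    _ = A.index := relIndex_mul_index le_sup_left
    _ ∣ p ^ (k + 1) * p ^ d := by rwa [← pow_add, add_comm, ← add_assoc]

end RelIndex

section Commutator

variable {E : Type*} [Group E]

theorem map_mk'_le_center_iff {N B : Subgroup E} [N.Normal] :
    B.map (mk' N) ≤ center (E ⧸ N) ↔ ⁅(⊤ : Subgroup E), B⁆ ≤ N := by
  rw [← commutator_top_left_eq_bot_iff_le_center,
    ← map_top_of_surjective _ (mk'_surjective N), ← map_commutator, Subgroup.map_eq_bot_iff,
    ker_mk']

theorem commutator_top_sup_le_iff {N A B : Subgroup E} [N.Normal] :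
    ⁅(⊤ : Subgroup E), A ⊔ B⁆ ≤ N ↔ ⁅(⊤ : Subgroup E), A⁆ ≤ N ∧ ⁅(⊤ : Subgroup E), B⁆ ≤ N := by
  simp only [← map_mk'_le_center_iff, Subgroup.map_sup, sup_le_iff]

theorem commutator_top_zpowers_le_iff {N : Subgroup E} [N.Normal] {x : E} :
    ⁅(⊤ : Subgroup E), zpowers x⁆ ≤ N ↔ ∀ g : E, ⁅g, x⁆ ∈ N := by
  refine ⟨fun h g ↦ h (commutator_mem_commutator (mem_top g) (mem_zpowers x)), fun h ↦ ?_⟩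
  rw [← map_mk'_le_center_iff, MonoidHom.map_zpowers, zpowers_le, Subgroup.mem_center_iff]
  refine (mk'_surjective N).forall.2 fun g ↦ ?_
  rw [← commutatorElement_eq_one_iff_mul_comm, ← map_commutatorElement, ← MonoidHom.mem_ker,
    ker_mk']
  exact h g

theorem commutator_commutator_le_of_rotate {N H₁ H₂ H₃ : Subgroup E} [N.Normal]
    (h₁ : ⁅⁅H₂, H₃⁆, H₁⁆ ≤ N) (h₂ : ⁅⁅H₃, H₁⁆, H₂⁆ ≤ N) : ⁅⁅H₁, H₂⁆, H₃⁆ ≤ N := by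
  rw [← ker_mk' N, ← Subgroup.map_eq_bot_iff] at h₁ h₂ ⊢
  simp only [map_commutator] at h₁ h₂ ⊢
  exact commutator_commutator_eq_bot_of_rotate h₁ h₂

/-- The homomorphism `g ↦ ⁅x, g⁆` attached to an element `x` all of whose commutators are
central. -/
def commutatorHom (x : E) (hx : ∀ g, ⁅x, g⁆ ∈ center E) : E →* E :=
  MonoidHom.mk' (fun g ↦ ⁅x, g⁆) fun a b ↦ by
    rw [commutatorElement_mul_right_eq_mul_conj, mul_assoc ⁅x, a⁆,
      Subgroup.mem_center_iff.1 (hx b) a, ← mul_assoc, mul_inv_cancel_right]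

theorem normal_range_commutatorHom (x : E) (hx : ∀ g, ⁅x, g⁆ ∈ center E) :
    (commutatorHom x hx).range.Normal := by
  have h_center : (commutatorHom x hx).range ≤ center E := by
    rintro _ ⟨g, rfl⟩
    exact hx g
  rw [← commutator_top_left_le_iff, commutator_top_left_eq_bot_iff_le_center.2 h_center]
  exact bot_le

theorem relIndex_commutator_sup_zpowers_dvd {A C : Subgroup E} [A.Normal] {x : E}
    (hxA : ∀ g, ⁅x, g⁆ ∈ A) (hC : ∀ c ∈ C, ⁅x, c⁆ ∈ ⁅(⊤ : Subgroup E), A⁆) :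
    ⁅(⊤ : Subgroup E), A⁆.relIndex ⁅(⊤ : Subgroup E), A ⊔ zpowers x⁆ ∣ C.index := by
  set M : Subgroup E := ⁅(⊤ : Subgroup E), A⁆
  have hx (q : E ⧸ M) : ⁅mk' M x, q⁆ ∈ center (E ⧸ M) := by
    obtain ⟨g, rfl⟩ := mk'_surjective M q
    exact map_mk'_le_center_iff.2 le_rfl ⟨_, hxA g, map_commutatorElement _ x g⟩
  let φ : E ⧸ M →* E ⧸ M := commutatorHom (mk' M x) hx
  have h_normal : φ.range.Normal := normal_range_commutatorHom (mk' M x) hx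
  have h_range : ⁅(⊤ : Subgroup E), A ⊔ zpowers x⁆ ≤ φ.range.comap (mk' M) := by
    refine commutator_top_sup_le_iff.2 ⟨?_, commutator_top_zpowers_le_iff.2 fun g ↦ ?_⟩
    · exact (ker_mk' M).ge.trans (MonoidHom.ker_le_comap _ _)
    · rw [← commutatorElement_inv]
      exact inv_mem ⟨mk' M g, (map_commutatorElement (mk' M) x g).symm⟩
  have h_ker : C ≤ (φ.comp (mk' M)).ker := fun c hc ↦ by
    rw [MonoidHom.mem_ker]
    exact (map_commutatorElement (mk' M) x c).symm.trans ((eq_one_iff _).2 (hC c hc))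
  calc M.relIndex ⁅(⊤ : Subgroup E), A ⊔ zpowers x⁆
      = Nat.card (map (mk' M) ⁅(⊤ : Subgroup E), A ⊔ zpowers x⁆) := by rw [← relIndex_ker, ker_mk']
    _ ∣ Nat.card φ.range := card_dvd_of_le (map_le_iff_le_comap.2 h_range)
    _ = (φ.comp (mk' M)).ker.index := by
      rw [index_ker, MonoidHom.range_comp, range_mk', ← MonoidHom.range_eq_map]
    _ ∣ C.index := index_dvd_of_le h_ker

theorem relIndex_commutator_dvd_index_mul {A C : Subgroup E} [A.Normal] {x : E}
    (hxA : ∀ g, ⁅x, g⁆ ∈ A) (hC : ∀ c ∈ C, ⁅x, c⁆ ∈ ⁅(⊤ : Subgroup E), A⁆) :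
    ⁅(⊤ : Subgroup E), A⁆.relIndex (commutator E) ∣
      C.index * ⁅(⊤ : Subgroup E), A ⊔ zpowers x⁆.relIndex (commutator E) := by
  rw [commutator_def, ← relIndex_mul_relIndex _ _ _
    (commutator_mono le_rfl (le_sup_left (b := zpowers x))) (commutator_mono le_rfl le_top)]
  exact mul_dvd_mul_right (relIndex_commutator_sup_zpowers_dvd hxA hC) _

theorem commutatorElement_mem_of_mem_sup_zpowers {A : Subgroup E} [A.Normal] {x c : E}
    (hc : c ∈ A ⊔ zpowers x) : ⁅x, c⁆ ∈ ⁅(⊤ : Subgroup E), A⁆ := by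
  have h_le : A ⊔ zpowers x ≤ (centralizer {mk' ⁅(⊤ : Subgroup E), A⁆ x}).comap (mk' _) := by
    refine sup_le ?_ ?_
    · exact map_le_iff_le_comap.1
        ((map_mk'_le_center_iff.2 le_rfl).trans (center_le_centralizer _))
    · rw [zpowers_le, mem_comap, mem_centralizer_singleton_iff]
  rw [← eq_one_iff, ← mk'_apply, map_commutatorElement, commutatorElement_eq_one_iff_mul_comm]
  exact (mem_centralizer_singleton_iff.1 (h_le hc)).symm

theorem relIndex_commutator_dvd_index_sup_zpowers_mul {A : Subgroup E} (hA : commutator E ≤ A)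
    (x : E) :
    ⁅(⊤ : Subgroup E), A⁆.relIndex (commutator E) ∣
      (A ⊔ zpowers x).index * ⁅(⊤ : Subgroup E), A ⊔ zpowers x⁆.relIndex (commutator E) :=
  have := Normal.of_commutator_le E hA
  relIndex_commutator_dvd_index_mul
    (fun g ↦ hA (commutator_mem_commutator (mem_top x) (mem_top g)))
    (fun _ ↦ commutatorElement_mem_of_mem_sup_zpowers)

theorem relIndex_commutator_dvd_pow_choose_two {p d : ℕ} (hp : p.Prime) {A : Subgroup E}
    (hA : commutator E ≤ A) (hd : A.index ∣ p ^ d) :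
    ⁅(⊤ : Subgroup E), A⁆.relIndex (commutator E) ∣ p ^ d.choose 2 := by
  induction d generalizing A with
  | zero =>
    obtain rfl : A = ⊤ := by rwa [pow_zero, Nat.dvd_one, index_eq_one] at hd
    exact (relIndex_self _).dvd.trans (one_dvd _)
  | succ d ih =>
    obtain rfl | hA_top := eq_or_ne A ⊤
    · exact (relIndex_self _).dvd.trans (one_dvd _)
    have := Normal.of_commutator_le E hA
    obtain ⟨x, -, hx⟩ := SetLike.exists_of_lt hA_top.lt_top
    have h_index : (A ⊔ zpowers x).index ∣ p ^ d :=
      index_sup_zpowers_dvd_of_pow_notMem hp (k := 0) hd (by rwa [pow_zero, pow_one])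
    rw [Nat.choose_succ_succ' d 1, Nat.choose_one_right, pow_add]
    exact (relIndex_commutator_dvd_index_sup_zpowers_mul hA x).trans
      (mul_dvd_mul h_index (ih (hA.trans le_sup_left) h_index))

theorem relIndex_commutator_dvd_of_pow_notMem {p d k : ℕ} (hp : p.Prime) {A : Subgroup E}
    (hA : commutator E ≤ A) (hd : A.index ∣ p ^ (d + k + 1)) {x : E} (hx : x ^ p ^ k ∉ A) :
    ⁅(⊤ : Subgroup E), A⁆.relIndex (commutator E) ∣ p ^ (d + 1).choose 2 := by
  have := Normal.of_commutator_le E hA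
  have h_index : (A ⊔ zpowers x).index ∣ p ^ d := index_sup_zpowers_dvd_of_pow_notMem hp hd hx
  rw [Nat.choose_succ_succ' d 1, Nat.choose_one_right, pow_add]
  exact (relIndex_commutator_dvd_index_sup_zpowers_mul hA x).trans
    (mul_dvd_mul h_index
      (relIndex_commutator_dvd_pow_choose_two hp (hA.trans le_sup_left) h_index))

end Commutator

section Extension

variable {E G : Type*} [Group E] [Group G] {f : E →* G}

theorem map_commutator_of_surjective (hf : Function.Surjective f) :
    (commutator E).map f = commutator G := by
  rw [map_commutator_eq, MonoidHom.range_eq_top.2 hf, ← commutator_def]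

theorem commutator_comap_center_le_ker : ⁅(⊤ : Subgroup E), (center G).comap f⁆ ≤ f.ker := by
  rw [← Subgroup.map_eq_bot_iff, map_commutator, eq_bot_iff]
  exact (commutator_mono le_top (map_comap_le _ _)).trans_eq
    (commutator_top_left_eq_bot_iff_le_center.2 le_rfl)

theorem commutator_commutator_comap_center_le :
    ⁅commutator E, (center G).comap f⁆ ≤ ⁅(⊤ : Subgroup E), f.ker⁆ := by
  have h := commutator_mono (commutator_comap_center_le_ker (f := f)) (le_refl (⊤ : Subgroup E))
  rw [commutator_comm f.ker] at h
  refine commutator_commutator_le_of_rotate h ?_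
  rwa [commutator_comm (comap f _)]

theorem relIndex_commutator_ker_dvd (hf : Function.Surjective f) [IsCyclic (commutator G)]
    (hG : commutator G ≤ center G) :
    ⁅(⊤ : Subgroup E), f.ker⁆.relIndex (commutator E) ∣
      (center G).index *
        ⁅(⊤ : Subgroup E), (commutator G).comap f⁆.relIndex (commutator E) := by
  obtain ⟨z, hz⟩ := (commutator G).isCyclic_iff_exists_zpowers_eq_top.1 ‹_›
  obtain ⟨x, hx, rfl⟩ : ∃ x ∈ commutator E, f x = z := by
    rw [← mem_map, map_commutator_of_surjective hf, ← hz]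
    exact mem_zpowers z
  have h_comap : (commutator G).comap f = f.ker ⊔ zpowers x := by
    rw [← hz, ← MonoidHom.map_zpowers, comap_map_eq, sup_comm]
  have hx_center : x ∈ (center G).comap f := hG (hz ▸ mem_zpowers (f x))
  rw [h_comap, ← index_comap_of_surjective (center G) hf]
  refine relIndex_commutator_dvd_index_mul (fun g ↦ ?_) fun c hc ↦
    commutator_commutator_comap_center_le (commutator_mem_commutator hx hc)
  rw [← commutatorElement_inv]
  exact inv_mem (commutator_comap_center_le_ker (commutator_mem_commutator (mem_top g) hx_center))

end Extension

section SchurMultiplier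

variable {G : Type*} [Group G]

theorem freeGroup_lift_id_surjective :
    Function.Surjective (FreeGroup.lift (id : G → G)) :=
  fun g ↦ ⟨FreeGroup.of g, FreeGroup.lift_apply_of⟩

theorem card_schurMultiplier_mul_card_commutator :
    Nat.card (SchurMultiplier G) * Nat.card (commutator G) =
      ⁅(⊤ : Subgroup (FreeGroup G)), presentationKernel G⁆.relIndex
        (commutator (FreeGroup G)) := by
  have h_normal : (presentationKernel G).Normal := MonoidHom.normal_ker _
  have h_mult : Nat.card (SchurMultiplier G) =
      ⁅(⊤ : Subgroup (FreeGroup G)), presentationKernel G⁆.relIndex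
        (presentationKernel G ⊓ commutator (FreeGroup G)) := rfl
  have h_comm : Nat.card (commutator G) =
      (presentationKernel G ⊓ commutator (FreeGroup G)).relIndex (commutator (FreeGroup G)) := by
    rw [inf_relIndex_right, presentationKernel, relIndex_ker,
      map_commutator_of_surjective freeGroup_lift_id_surjective]
  rw [h_mult, h_comm]
  exact relIndex_mul_relIndex _ _ _
    (le_inf (commutator_le_right _ _) (commutator_mono le_rfl le_top)) inf_le_right

theorem card_schurMultiplier_mul_card_commutator_dvd {p d k : ℕ} (hp : p.Prime)
    [IsCyclic (commutator G)] (hG : commutator G ≤ center G)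
    (hd : (commutator G).index ∣ p ^ (d + k + 1)) {t : G} (ht : t ^ p ^ k ∉ commutator G) :
    Nat.card (SchurMultiplier G) * Nat.card (commutator G) ∣
      (center G).index * p ^ (d + 1).choose 2 := by
  obtain ⟨w, rfl⟩ := freeGroup_lift_id_surjective t
  rw [card_schurMultiplier_mul_card_commutator]
  refine (relIndex_commutator_ker_dvd freeGroup_lift_id_surjective hG).trans
    (mul_dvd_mul_left _ (relIndex_commutator_dvd_of_pow_notMem hp (k := k) ?_ ?_ (x := w) ?_))
  · rw [← map_le_iff_le_comap, map_commutator_of_surjective freeGroup_lift_id_surjective]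
  · rwa [index_comap_of_surjective _ freeGroup_lift_id_surjective]
  · rwa [mem_comap, map_pow]

end SchurMultiplier

section PGroup

theorem dvd_pow_pred_of_mul_dvd_pow {p a e : ℕ} (hp : 0 < p) (h : a * p ∣ p ^ e) :
    a ∣ p ^ (e - 1) := by
  cases e with
  | zero => exact dvd_of_mul_right_dvd h
  | succ e => exact Nat.dvd_of_mul_dvd_mul_right hp h

variable {p : ℕ} {G : Type*} [Group G]

theorem le_center_of_card_eq_prime [Fact p.Prime] (hG : IsPGroup p G) {N : Subgroup G} [N.Normal]
    (hN : Nat.card N = p) : N ≤ center G := by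
  have : Fact (Nat.card N).Prime := hN ▸ ‹_›
  have : Finite N := Nat.finite_of_card_ne_zero (Fact.out : (Nat.card N).Prime).ne_zero
  obtain ⟨b, hb_fixed, hb⟩ :=
    (hG.of_equiv ConjAct.toConjAct).exists_fixed_point_of_prime_dvd_card_of_fixed_point N
      hN.symm.dvd (a := 1) fun g ↦ smul_one g
  have hb_center : (b : G) ∈ center G := Subgroup.mem_center_iff.2 fun g ↦ by
    have h_conj : g * b * g⁻¹ = b := congrArg Subtype.val (hb_fixed (ConjAct.toConjAct g))
    exact mul_inv_eq_iff_eq_mul.1 h_conj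
  obtain h_bot | h_top := ((center G).subgroupOf N).eq_bot_or_eq_top_of_prime_card
  · exact absurd ((Subgroup.eq_bot_iff_forall _).1 h_bot b hb_center) hb.symm
  · exact subgroupOf_eq_top.1 h_top

theorem card_schurMultiplier_dvd_of_card_commutator_eq_prime {n : ℕ} (hp : p.Prime)
    (hG : Nat.card G = p ^ n) (h_comm : Nat.card (commutator G) = p)
    (h_center : p ^ 3 ∣ Nat.card (center G)) {t : G} (ht : t ^ p ∉ commutator G) :
    Nat.card (SchurMultiplier G) ∣ p ^ ((n - 1) * (n - 2) / 2 - 2) := by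
  have : Fact p.Prime := ⟨hp⟩
  obtain ⟨m, rfl⟩ : ∃ m, n = m + 3 := Nat.exists_eq_add_of_le' <|
    (Nat.pow_dvd_pow_iff_le_right hp.one_lt).1 (hG ▸ h_center.trans (card_subgroup_dvd_card _))
  have h_cyclic : IsCyclic (commutator G) := isCyclic_of_prime_card h_comm
  have h_index_comm : (commutator G).index ∣ p ^ (m + 1 + 1) := by
    refine Nat.dvd_of_mul_dvd_mul_left hp.pos (Dvd.intro_left 1 ?_)
    rw [one_mul, ← pow_succ', ← hG, ← (commutator G).card_mul_index, h_comm]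
  have h_index_center : (center G).index ∣ p ^ m := by
    refine Nat.dvd_of_mul_dvd_mul_left (pow_pos hp.pos 3) ?_
    rw [← pow_add, add_comm 3, ← hG, ← (center G).card_mul_index]
    exact mul_dvd_mul_right h_center _
  have h_exponent : (m + 3 - 1) * (m + 3 - 2) / 2 - 2 = m + (m + 1).choose 2 - 1 := by
    have h_choose : (m + 3 - 1) * (m + 3 - 2) / 2 = (m + 2).choose 2 :=
      (Nat.choose_two_right _).symm
    rw [h_choose, Nat.choose_succ_succ' (m + 1) 1, Nat.choose_one_right]
    lia
  rw [h_exponent]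
  refine dvd_pow_pred_of_mul_dvd_pow hp.pos ?_
  calc Nat.card (SchurMultiplier G) * p
      = Nat.card (SchurMultiplier G) * Nat.card (commutator G) := by rw [h_comm]
    _ ∣ (center G).index * p ^ (m + 1).choose 2 :=
        card_schurMultiplier_mul_card_commutator_dvd hp
          (le_center_of_card_eq_prime (IsPGroup.of_card hG) h_comm) h_index_comm
          (by rwa [pow_one])
    _ ∣ p ^ (m + (m + 1).choose 2) := by
        rw [pow_add]
        exact mul_dvd_mul_right h_index_center _

end PGroup

section Prod

variable {H T : Type*} [Group H]

theorem card_subgroup_prod [Group T] (A : Subgroup H) (B : Subgroup T) :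
    Nat.card (A.prod B) = Nat.card A * Nat.card B := by
  rw [Nat.card_congr (A.prodEquiv B).toEquiv, Nat.card_prod]

theorem commutator_prod_commGroup [CommGroup T] :
    commutator (H × T) = (commutator H).prod (⊥ : Subgroup T) := by
  rw [← commutator_eq_bot (G := T)]
  simp only [commutator_def, ← top_prod_top, commutator_prod_prod]

theorem card_center_prod_commGroup [CommGroup T] :
    Nat.card (center (H × T)) = Nat.card (center H) * Nat.card T := by
  rw [Subgroup.center_prod, CommGroup.center_eq_top, card_subgroup_prod, card_top]

theorem schurMultiplier_extraspecial_times_nonelementary_le_general {p n : ℕ} (hp : p.Prime)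
    [CommGroup T] (hH : Nat.card (commutator H) = p) (hT : ¬ Monoid.exponent T ∣ p)
    (hG : Nat.card (H × T) = p ^ n) :
    Nat.card (SchurMultiplier (H × T)) ∣ p ^ ((n - 1) * (n - 2) / 2 - 2) := by
  have : Fact p.Prime := ⟨hp⟩
  have h_card_T : Nat.card T ∣ p ^ n := hG ▸ Nat.card_prod H T ▸ dvd_mul_left _ _
  have h_pgroup_H : IsPGroup p H :=
    (IsPGroup.of_card hG).of_injective (MonoidHom.inl H T) (Prod.mk_left_injective 1)
  obtain ⟨t, ht⟩ : ∃ t : T, t ^ p ≠ 1 := by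
    simpa only [Monoid.exponent_dvd_iff_forall_pow_eq_one, not_forall] using hT
  have h_dvd_orderOf : p ^ 2 ∣ orderOf t :=
    pow_succ_dvd_orderOf_of_pow_ne_one hp ((_root_.orderOf_dvd_natCard t).trans h_card_T)
      (by rwa [pow_one])
  refine card_schurMultiplier_dvd_of_card_commutator_eq_prime hp hG ?_ ?_ (t := (1, t)) ?_
  · rw [commutator_prod_commGroup, card_subgroup_prod, hH, card_bot, mul_one]
  · rw [card_center_prod_commGroup, pow_succ']
    exact mul_dvd_mul (hH ▸ card_dvd_of_le (le_center_of_card_eq_prime h_pgroup_H hH))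
      (h_dvd_orderOf.trans (_root_.orderOf_dvd_natCard t))
  · rw [commutator_prod_commGroup]
    exact fun h ↦ ht (mem_bot.1 h.2)

end Prod

/-- If `H` is an extraspecial `p`-group and `T` is a finite abelian `p`-group that is
not elementary abelian, then `G = H × T`, of order `p^n`, satisfies
`|M(G)| ≤ p^((n-1)(n-2)/2 - 2)`. -/
theorem schurMultiplier_extraspecial_times_nonelementary_le {p n : ℕ} (hp : p.Prime)
    {H : Type*} [Group H] [Finite H] (hH : IsExtraspecial p H)
    {T : Type*} [CommGroup T] [Finite T] (hT : IsPGroup p T)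
    (hTexp : p < Monoid.exponent T)
    (hG : Nat.card (H × T) = p ^ n) :
    Nat.card (SchurMultiplier (H × T)) ≤ p ^ ((n - 1) * (n - 2) / 2 - 2) := by
  have hT_exp : ¬ Monoid.exponent T ∣ p := fun h ↦ hTexp.not_ge (Nat.le_of_dvd hp.pos h)
  exact Nat.le_of_dvd (pow_pos hp.pos _)
    (schurMultiplier_extraspecial_times_nonelementary_le_general hp (hH.1 ▸ hH.2.2) hT_exp hG)
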